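/- arXiv:2507.19571 — 2 statements merged into one kernel-verified Lean document; each statement's English description precedes it below -/
import Mathlib

section
/- Let G be a finite group of minimal order among groups having an irreducible complex character of degree n, and let χ ∈ Irr(G) with χ(1) = n. If N is a proper normal subgroup of G, then gcd(|G : N|, n) > 1. -/
open FDRep Module CategoryTheory

/-- A group has an irreducible complex character of degree `n`. -/
def HasIrrCharDeg (G : Type) [Group G] (n : ℕ) : Prop :=
  ∃ V : FDRep ℂ G, Simple V ∧ finrank ℂ V = n


lemma aux_dvd_of_integral (a b : ℕ) (hb : b ≠ 0) (h : IsIntegral ℤ ((a : ℂ) / b)) : b ∣ a := by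
  have h1 : IsIntegral ℤ ((a : ℚ) / b) := by
    rw [← isIntegral_algebraMap_iff (algebraMap ℚ ℂ).injective]
    simpa using h
  obtain ⟨z, hz⟩ := IsIntegrallyClosed.isIntegral_iff.mp h1
  have hb' : (b : ℚ) ≠ 0 := by exact_mod_cast hb
  rw [eq_div_iff hb', eq_intCast] at hz
  have : z * (b : ℤ) = a := by exact_mod_cast hz
  exact Int.natCast_dvd_natCast.mp ⟨z, by rw [← this, mul_comm]⟩

/-- algebra automorphisms of matrix algebras are inner, by determinant one matrices. -/
lemma aux_inner {e : ℕ} [NeZero e]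
    (f : Matrix (Fin e) (Fin e) ℂ ≃ₐ[ℂ] Matrix (Fin e) (Fin e) ℂ) :
    ∃ w wi : Matrix (Fin e) (Fin e) ℂ, w * wi = 1 ∧ wi * w = 1 ∧ w.det = 1 ∧
      ∀ x, f x = w * x * wi := by
  let E : Matrix (Fin e) (Fin e) ℂ ≃ₐ[ℂ] Module.End ℂ (Fin e → ℂ) := Matrix.toLinAlgEquiv'
  obtain ⟨T, hT⟩ := AlgEquiv.eq_linearEquivConjAlgEquiv ((E.symm.trans f).trans E)
  let u : Matrix (Fin e) (Fin e) ℂ := E.symm T.toLinearMap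
  let ui : Matrix (Fin e) (Fin e) ℂ := E.symm T.symm.toLinearMap
  have h1 : u * ui = 1 := by
    simp only [u, ui]
    rw [← map_mul, ← map_one E.symm]
    congr 1
    ext; simp
  have h2 : ui * u = 1 := by
    simp only [u, ui]
    rw [← map_mul, ← map_one E.symm]
    congr 1
    ext; simp
  have h3 : ∀ x, f x = u * x * ui := by
    intro x
    have := congrArg (fun F => E.symm (F (E x))) hT
    simp only [AlgEquiv.trans_apply, AlgEquiv.symm_apply_apply] at this
    rw [this]
    apply E.injective
    simp only [map_mul, u, ui, AlgEquiv.apply_symm_apply]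
    rfl
  have hd : u.det ≠ 0 := by
    intro h0
    have := congrArg Matrix.det h1
    simp [h0] at this
  obtain ⟨c, hc⟩ := IsAlgClosed.exists_pow_nat_eq (u.det) (NeZero.pos e)
  have hc0 : c ≠ 0 := by
    rintro rfl
    rw [zero_pow (NeZero.ne e)] at hc
    exact hd hc.symm
  refine ⟨c⁻¹ • u, c • ui, ?_, ?_, ?_, ?_⟩
  · simp [h1, smul_smul, hc0]
  · simp [h2, smul_smul, hc0]
  · rw [Matrix.det_smul, Fintype.card_fin, ← hc, inv_pow]
    field_simp
  · intro x
    rw [h3]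
    simp [smul_smul, hc0]

lemma aux_core1 {H : Type*} [Group H] [Fintype H] {e : ℕ} [NeZero e]
    (α : H →* (Matrix (Fin e) (Fin e) ℂ ≃ₐ[ℂ] Matrix (Fin e) (Fin e) ℂ))
    (hfix : ∀ x, (∀ h, α h x = x) → ∃ c : ℂ, x = algebraMap ℂ _ c) :
    e ∣ Fintype.card H := by
  choose w wi h1 h2 hdet hw using fun h => aux_inner (α h)
  have he : (e : ℂ) ≠ 0 := by exact_mod_cast NeZero.ne e
  set m : ℂ := ((Fintype.card H : ℕ) : ℂ) with hm
  have htr : ∀ h x, (α h x).trace = x.trace := by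
    intro h x
    rw [hw, Matrix.mul_assoc, Matrix.trace_mul_comm, Matrix.mul_assoc, h2, Matrix.mul_one]
  have havg : ∀ x, ∑ h, w h * x * wi h = algebraMap ℂ _ (m / e * x.trace) := by
    intro x
    have hs : ∑ h, w h * x * wi h = ∑ h, α h x := by simp [hw]
    rw [hs]
    obtain ⟨c, hc⟩ := hfix (∑ h, α h x) (by
      intro k
      rw [map_sum]
      refine Fintype.sum_equiv (Equiv.mulLeft k) _ _ ?_
      intro h
      simp [map_mul])
    rw [hc]
    congr 1
    have := congrArg Matrix.trace hc
    rw [Matrix.trace_sum] at this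
    simp only [htr, Finset.sum_const, Finset.card_univ, nsmul_eq_mul,
      Algebra.algebraMap_eq_smul_one, Matrix.trace_smul, Matrix.trace_one, Fintype.card_fin,
      smul_eq_mul] at this
    field_simp
    rw [hm, this]
  have horth : ∀ i j k l, ∑ h, w h i j * wi h k l =
      if i = l ∧ j = k then m / e else 0 := by
    intro i j k l
    have := congrFun (congrFun (havg (Matrix.single j k 1)) i) l
    rw [Matrix.sum_apply] at this
    have h3 : ∀ h : H, (w h * (Matrix.single j k 1 : Matrix (Fin e) (Fin e) ℂ) * wi h) i l = w h i j * wi h k l := by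
      intro h
      rw [Matrix.mul_apply, Finset.sum_eq_single k]
      · simp
      · intro b _ hb
        simp [Matrix.mul_single_apply_of_ne, hb]
      · simp
    simp only [h3] at this
    rw [this, Matrix.algebraMap_matrix_apply]
    by_cases hjk : j = k
    · subst hjk; simp
    · simp [hjk, Matrix.trace_single_eq_of_ne]
  let R := integralClosure ℤ ℂ
  -- scalars
  have hprod : ∀ a b (u v : Matrix (Fin e) (Fin e) ℂ), a * b = 1 → b * a = 1 → a.det = 1 →
      u * v = 1 → v * u = 1 → u.det = 1 →
      (∀ x, a * x * b = u * x * v) → ∃ c : R, a = c • u := by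
    intro a b u v hab hba hda huv hvu hdu hx
    obtain ⟨c, hc⟩ : ∃ c : ℂ, v * a = algebraMap ℂ _ c := by
      have hcomm : ∀ x, Commute x (v * a) := by
        intro x
        have h4 := congrArg (fun y => v * y * a) (hx x)
        have h5 : v * (a * x * b) * a = v * a * x := by
          calc v * (a * x * b) * a = v * a * x * (b * a) := by simp only [mul_assoc]
            _ = _ := by rw [hba, mul_one]
        have h6 : v * (u * x * v) * a = x * (v * a) := by
          calc v * (u * x * v) * a = (v * u) * x * (v * a) := by simp only [mul_assoc]
            _ = _ := by rw [hvu, one_mul]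
        rw [h5, h6] at h4
        exact h4.symm
      obtain ⟨c, hc⟩ := Matrix.mem_range_scalar_of_commute_single (M := v * a)
        (fun i j _ => hcomm _)
      exact ⟨c, hc.symm⟩
    have ha : a = c • u := by
      calc a = u * (v * a) := by rw [← mul_assoc, huv, one_mul]
        _ = c • u := by rw [hc, Algebra.algebraMap_eq_smul_one]; simp
    have hce : c ^ e = 1 := by
      rw [ha, Matrix.det_smul, hdu] at hda
      simpa using hda
    have hci : IsIntegral ℤ c := by
      refine IsIntegral.of_pow (NeZero.pos e) ?_
      rw [hce]; exact isIntegral_one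
    exact ⟨⟨c, hci⟩, ha⟩
  have hmul : ∀ h k, ∃ c : R, w h * w k = c • w (h * k) := by
    intro h k
    refine hprod (w h * w k) (wi k * wi h) _ (wi (h * k)) ?_ ?_ ?_ (h1 _) (h2 _) (hdet _) ?_
    · calc w h * w k * (wi k * wi h) = w h * (w k * wi k) * wi h := by simp only [mul_assoc]
        _ = 1 := by rw [h1, mul_one, h1]
    · calc wi k * wi h * (w h * w k) = wi k * (wi h * w h) * w k := by simp only [mul_assoc]
        _ = 1 := by rw [h2, mul_one, h2]
    · rw [Matrix.det_mul, hdet, hdet, mul_one]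
    · intro x
      rw [← hw, map_mul, AlgEquiv.mul_apply, hw k, hw h]
      simp only [mul_assoc]
  have hone : ∃ c : R, (1 : Matrix (Fin e) (Fin e) ℂ) = c • w 1 := by
    refine hprod 1 1 _ (wi 1) (by simp) (by simp) (by simp) (h1 _) (h2 _) (hdet _) ?_
    intro x
    rw [← hw, map_one]; simp
  have hinv : ∀ h, ∃ c : R, wi h = c • w h⁻¹ := by
    intro h
    refine hprod (wi h) (w h) _ (wi h⁻¹) (h2 _) (h1 _) ?_ (h1 _) (h2 _) (hdet _) ?_
    · have := congrArg Matrix.det (h1 h)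
      simpa [hdet] using this
    · intro x
      rw [← hw, map_inv]
      apply (α h).injective
      rw [hw h, ← AlgEquiv.mul_apply, mul_inv_cancel]
      calc w h * (wi h * x * w h) * wi h = (w h * wi h) * x * (w h * wi h) := by
            simp only [mul_assoc]
        _ = _ := by rw [h1]; simp
  let M : Submodule R (Matrix (Fin e) (Fin e) ℂ) := Submodule.span R (Set.range w)
  have hwM : ∀ h, w h ∈ M := fun h => Submodule.subset_span ⟨h, rfl⟩
  have hMone : (1 : Matrix (Fin e) (Fin e) ℂ) ∈ M := by
    obtain ⟨c, hc⟩ := hone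
    rw [hc]; exact M.smul_mem _ (hwM _)
  have hMmul : ∀ x y, x ∈ M → y ∈ M → x * y ∈ M := by
    intro x y hx hy
    have : M * M ≤ M := by
      rw [Submodule.span_mul_span, Submodule.span_le]
      rintro _ ⟨_, ⟨h, rfl⟩, _, ⟨k, rfl⟩, rfl⟩
      obtain ⟨c, hc⟩ := hmul h k
      simp only [hc]
      exact M.smul_mem _ (hwM _)
    exact this (Submodule.mul_mem_mul hx hy)
  let S : Subalgebra R (Matrix (Fin e) (Fin e) ℂ) := M.toSubalgebra hMone hMmul
  have hSfg : (Subalgebra.toSubmodule S).FG := by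
    have : Subalgebra.toSubmodule S = M := by simp [S]
    rw [this]
    exact Submodule.fg_span (Set.finite_range w)
  have hmemInt : ∀ c : ℂ, algebraMap ℂ (Matrix (Fin e) (Fin e) ℂ) c ∈ M → IsIntegral ℤ c := by
    intro c hc
    have h5 : IsIntegral R (algebraMap ℂ (Matrix (Fin e) (Fin e) ℂ) c) :=
      IsIntegral.of_mem_of_fg S hSfg _ hc
    have h6 : IsIntegral R c :=
      (isIntegral_algebraMap_iff (algebraMap ℂ (Matrix (Fin e) (Fin e) ℂ)).injective).mp h5
    exact isIntegral_trans (R := ℤ) (A := R) c h6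
  have hwiM : ∀ h, wi h ∈ M := by
    intro h
    obtain ⟨c, hc⟩ := hinv h
    rw [hc]; exact M.smul_mem _ (hwM _)
  have hlam : ∀ k, IsIntegral ℤ (m / e * (w k).trace) := by
    intro k
    apply hmemInt
    rw [← havg]
    exact M.sum_mem fun h _ => hMmul _ _ (hMmul _ _ (hwM _) (hwM _)) (hwiM _)
  have hfinal : IsIntegral ℤ (m / e * (m / e)) := by
    apply hmemInt
    have : algebraMap ℂ (Matrix (Fin e) (Fin e) ℂ) (m / e * (m / e)) =
        ∑ k, (⟨_, hlam k⟩ : R) • wi k := by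
      have h7 : ∀ k, (⟨_, hlam k⟩ : R) • wi k = (m / e * (w k).trace) • wi k := fun k => rfl
      simp only [h7]
      ext j l
      rw [Matrix.sum_apply, Matrix.algebraMap_matrix_apply]
      simp only [Matrix.smul_apply, smul_eq_mul, Matrix.trace, Matrix.diag, Finset.mul_sum,
        Finset.sum_mul, mul_assoc]
      rw [Finset.sum_comm]
      simp only [← Finset.mul_sum, horth]
      by_cases hjl : j = l
      · subst hjl; simp
      · simp only [hjl, if_false]
        rw [Finset.sum_eq_zero]; · simp
        intro i _
        rw [if_neg]
        rintro ⟨rfl, rfl⟩; exact hjl rfl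
    rw [this]
    exact M.sum_mem fun k _ => M.smul_mem _ (hwiM _)
  have h8 : IsIntegral ℤ (m / e) := by
    refine IsIntegral.of_pow (n := 2) (by norm_num) ?_
    rw [pow_two]; exact hfinal
  exact aux_dvd_of_integral _ _ (NeZero.ne e) h8

lemma aux_trace_nat {V : Type*} [AddCommGroup V] [Module ℂ V] [FiniteDimensional ℂ V]
    (f : Module.End ℂ V) (hf : f * f = f) :
    LinearMap.trace ℂ V f = (finrank ℂ (LinearMap.range f) : ℂ) :=
  LinearMap.IsProj.trace (LinearMap.IsIdempotentElem.isProj_range f hf)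

lemma aux_core2 {H : Type*} [Group H] [Fintype H] {B : Type*} [Ring B] [Algebra ℂ B]
    [IsSemisimpleRing B] [FiniteDimensional ℂ B]
    {V : Type*} [AddCommGroup V] [Module ℂ V] [FiniteDimensional ℂ V]
    (φ : B →ₐ[ℂ] Module.End ℂ V) (hφ : Function.Injective φ)
    (α : H →* (B ≃ₐ[ℂ] B))
    (hfix : ∀ x, (∀ h, α h x = x) → ∃ c : ℂ, x = algebraMap ℂ _ c)
    (htr : ∀ h b, LinearMap.trace ℂ V (φ (α h b)) = LinearMap.trace ℂ V (φ b))
    (hpos : finrank ℂ V ≠ 0)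
    (hcop : Nat.Coprime (Fintype.card H) (finrank ℂ V)) :
    finrank ℂ B = 1 := by
  have hn : (finrank ℂ V : ℂ) ≠ 0 := by exact_mod_cast hpos
  have hVn : Nontrivial V := Module.nontrivial_of_finrank_pos (R := ℂ) (Nat.pos_of_ne_zero hpos)
  have hBn : Nontrivial B := by
    refine ⟨0, 1, fun h => ?_⟩
    have := congrArg φ h
    rw [map_zero, map_one] at this
    exact zero_ne_one this
  obtain ⟨t, d, hd, ⟨ψ⟩⟩ := IsSemisimpleRing.exists_algEquiv_pi_matrix_of_isAlgClosed ℂ B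
  -- central idempotents are trivial
  have hcent : ∀ f : B, f * f = f → (∀ x, x * f = f * x) → f ≠ 0 → f = 1 := by
    intro f hf hfc hf0
    have hff : φ f * φ f = φ f := by rw [← map_mul, hf]
    obtain ⟨c, hc⟩ := hfix (∑ h, α h f) (by
      intro k
      rw [map_sum]
      refine Fintype.sum_equiv (Equiv.mulLeft k) _ _ ?_
      intro h
      simp [map_mul])
    have hci : IsIntegral ℤ c := by
      let Z := Subalgebra.center ℂ B
      have hmem : ∀ h, α h f ∈ Z := by
        intro h
        rw [Subalgebra.mem_center_iff]
        intro b
        obtain ⟨b, rfl⟩ := (α h).surjective b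
        rw [← map_mul, hfc, map_mul]
      have hmemInt : IsIntegral ℤ (∑ h, (⟨α h f, hmem h⟩ : Z)) := by
        refine IsIntegral.sum _ fun h _ => ?_
        refine ⟨Polynomial.X ^ 2 - Polynomial.X,
          Polynomial.monic_X_pow_sub (by simp), ?_⟩
        have h0 : (⟨α h f, hmem h⟩ : Z) * ⟨α h f, hmem h⟩ = ⟨α h f, hmem h⟩ :=
          Subtype.ext (by change α h f * α h f = α h f; rw [← map_mul, hf])
        simp [pow_two, h0]
      have heq : (∑ h, (⟨α h f, hmem h⟩ : Z)) = algebraMap ℂ Z c := by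
        apply Subtype.ext
        rw [AddSubmonoidClass.coe_finsetSum]
        exact hc
      rw [heq] at hmemInt
      exact (isIntegral_algebraMap_iff (algebraMap ℂ Z).injective).mp hmemInt
    have h1 := congrArg (fun x => LinearMap.trace ℂ V (φ x)) hc
    simp only [map_sum, htr, Finset.sum_const, Finset.card_univ, nsmul_eq_mul,
      Algebra.algebraMap_eq_smul_one, map_smul, map_one, LinearMap.trace_one, smul_eq_mul] at h1
    rw [aux_trace_nat _ hff] at h1
    have h2 : finrank ℂ V ∣ Fintype.card H * finrank ℂ (LinearMap.range (φ f)) := by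
      apply aux_dvd_of_integral _ _ hpos
      push_cast
      rw [h1, mul_div_assoc, div_self hn, mul_one]
      exact hci
    have h3 : finrank ℂ V ∣ finrank ℂ (LinearMap.range (φ f)) :=
      hcop.symm.dvd_of_dvd_mul_left h2
    have h4 : finrank ℂ (LinearMap.range (φ f)) ≠ 0 := by
      intro h0
      rw [Submodule.finrank_eq_zero, LinearMap.range_eq_bot] at h0
      exact hf0 (hφ (by rw [h0, map_zero]))
    have h5 : LinearMap.range (φ f) = ⊤ := by
      apply Submodule.eq_top_of_finrank_eq
      exact le_antisymm (Submodule.finrank_le _) (Nat.le_of_dvd (Nat.pos_of_ne_zero h4) h3)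
    apply hφ
    rw [map_one]
    ext v
    obtain ⟨u, rfl⟩ := LinearMap.range_eq_top.mp h5 v
    rw [← Module.End.mul_apply, hff]; rfl
  have ht : Nonempty (Fin t) := by
    by_contra hne
    rw [not_nonempty_iff] at hne
    have : Subsingleton B := ψ.toEquiv.subsingleton
    exact not_subsingleton B this
  obtain ⟨i⟩ := ht
  have hi : ∀ j, j = i := by
    intro j
    by_contra hj
    have h1 := hcent (ψ.symm (Pi.single i 1)) (by
        rw [← map_mul, ← Pi.single_mul, mul_one]) (by
        intro x
        apply ψ.injective
        rw [map_mul, map_mul, AlgEquiv.apply_symm_apply]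
        funext k
        by_cases hk : k = i
        · subst hk; simp
        · simp [hk]) (by
        intro h0
        have h1 := congrArg ψ h0
        rw [AlgEquiv.apply_symm_apply, map_zero] at h1
        have h2 := congrFun h1 i
        have := hd i
        simp at h2)
    have h2 := congrArg ψ h1
    rw [AlgEquiv.apply_symm_apply, map_one] at h2
    have h3 := congrFun h2 j
    have := hd j
    simp [hj] at h3
  have := hd i
  let π : (Π j, Matrix (Fin (d j)) (Fin (d j)) ℂ) →ₐ[ℂ] Matrix (Fin (d i)) (Fin (d i)) ℂ :=
    Pi.evalAlgHom ℂ _ i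
  have hπ : Function.Bijective π := by
    constructor
    · intro x y hxy
      funext j
      obtain rfl := hi j
      exact hxy
    · exact Function.surjective_eval i
  let E := ψ.trans (AlgEquiv.ofBijective π hπ)
  have hdvd : d i ∣ finrank ℂ V := by
    let u : Fin (d i) → Fin (d i) → B := fun a b => E.symm (Matrix.single a b 1)
    have hu : ∀ a b c, u a b * u b c = u a c := by
      intro a b c
      simp only [u]
      rw [← map_mul, Matrix.single_mul_single_same, mul_one]
    have h1 : ∀ a, LinearMap.trace ℂ V (φ (u a a)) = LinearMap.trace ℂ V (φ (u 0 0)) := by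
      intro a
      rw [← hu a 0 a, map_mul, LinearMap.trace_mul_comm, ← map_mul, hu]
    have h2 : ∑ a, u a a = 1 := by
      simp only [u]
      rw [← map_sum, Matrix.sum_single_one, map_one]
    have h3 := congrArg (fun x => LinearMap.trace ℂ V (φ x)) h2
    simp only [map_sum, h1, map_one, LinearMap.trace_one, Finset.sum_const, Finset.card_univ,
      Fintype.card_fin, nsmul_eq_mul] at h3
    rw [aux_trace_nat _ (by rw [← map_mul, hu])] at h3
    exact ⟨_, (by exact_mod_cast h3.symm)⟩
  let α' : H →* (Matrix (Fin (d i)) (Fin (d i)) ℂ ≃ₐ[ℂ] Matrix (Fin (d i)) (Fin (d i)) ℂ) :=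
    { toFun := fun h => (E.symm.trans (α h)).trans E
      map_one' := by ext1 x; simp
      map_mul' := by intro a b; ext1 x; simp }
  have hdvd2 : d i ∣ Fintype.card H := by
    apply aux_core1 α'
    intro x hx
    obtain ⟨c, hc⟩ := hfix (E.symm x) (by
      intro h
      apply E.injective
      rw [AlgEquiv.apply_symm_apply]
      exact hx h)
    refine ⟨c, ?_⟩
    have := congrArg E hc
    rwa [AlgEquiv.apply_symm_apply, AlgEquiv.commutes] at this
  have h1 : d i = 1 := Nat.eq_one_of_dvd_coprimes hcop hdvd2 hdvd
  rw [E.toLinearEquiv.finrank_eq, Module.finrank_matrix]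
  simp [h1]

/-- the algebra of endomorphisms commuting with a representation -/
noncomputable abbrev auxCent {G V : Type*} [Group G] [AddCommGroup V] [Module ℂ V]
    (ρ : Representation ℂ G V) : Subalgebra ℂ (Module.End ℂ V) :=
  Subalgebra.centralizer ℂ (Set.range ρ)

noncomputable def auxCentEquiv {G V : Type*} [Group G] [AddCommGroup V] [Module ℂ V]
    (ρ : Representation ℂ G V) : Representation.IntertwiningMap ρ ρ ≃ₐ[ℂ] auxCent ρ :=
  AlgEquiv.ofLinearEquiv
    { toFun := fun f => ⟨f.toLinearMap, by
        rw [Subalgebra.mem_centralizer_iff]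
        rintro _ ⟨g, rfl⟩
        exact (f.isIntertwining' g).symm⟩
      invFun := fun b => ⟨b.1, fun g =>
        ((Subalgebra.mem_centralizer_iff ℂ).mp b.2 _ ⟨g, rfl⟩).symm⟩
      map_add' := fun _ _ => rfl
      map_smul' := fun _ _ => rfl
      left_inv := fun _ => rfl
      right_inv := fun _ => rfl } rfl (fun _ _ => rfl)

lemma aux_semisimple {G V : Type*} [Group G] [Finite G] [AddCommGroup V] [Module ℂ V]
    [FiniteDimensional ℂ V]
    (ρ : Representation ℂ G V) : IsSemisimpleRing (auxCent ρ) := by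
  have hne : NeZero (Nat.card G : ℂ) := ⟨by exact_mod_cast Nat.card_pos.ne'⟩
  have : IsSemisimpleModule (MonoidAlgebra ℂ G) ρ.asModule := inferInstance
  have : Module.Finite ℂ ρ.asModule := inferInstanceAs (Module.Finite ℂ V)
  have : Module.Finite (MonoidAlgebra ℂ G) ρ.asModule := Module.Finite.of_restrictScalars_finite ℂ _ _
  have : IsSemisimpleRing (Module.End (MonoidAlgebra ℂ G) ρ.asModule) :=
    IsSemisimpleRing.moduleEnd _ _
  exact ((Representation.IntertwiningMap.equivAlgEnd (ρ := ρ)).symm.trans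
    (auxCentEquiv ρ)).toRingEquiv.isSemisimpleRing

lemma aux_finrank {G : Type} [Group G] (V : FDRep ℂ G) :
    finrank ℂ (V ⟶ V) = finrank ℂ (auxCent V.ρ) :=
  (((FDRep.forget₂HomLinearEquiv V V).symm.trans (Rep.homLinearEquiv _ _)).trans
    (auxCentEquiv V.ρ).toLinearEquiv).finrank_eq

/-- conjugation action -/
noncomputable def auxConj {G V : Type*} [Group G] [AddCommGroup V] [Module ℂ V]
    (ρ : Representation ℂ G V) (N : Subgroup G) [hN : N.Normal] :
    G →* (auxCent (ρ.comp N.subtype) ≃ₐ[ℂ] auxCent (ρ.comp N.subtype)) :=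
  have key : ∀ (g : G) (b : auxCent (ρ.comp N.subtype)),
      ρ g * b.1 * ρ g⁻¹ ∈ auxCent (ρ.comp N.subtype) := by
    intro g b
    rw [Subalgebra.mem_centralizer_iff]
    rintro _ ⟨x, rfl⟩
    have h1 := (Subalgebra.mem_centralizer_iff ℂ).mp b.2 (ρ (g⁻¹ * x * g))
      ⟨⟨g⁻¹ * x * g, by simpa using hN.conj_mem x x.2 g⁻¹⟩, rfl⟩
    have h2 : ρ (x : G) * ρ g = ρ g * ρ (g⁻¹ * x * g) := by
      rw [← map_mul, ← map_mul]; congr 1; group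
    have h3 : ρ (g⁻¹ * x * g) * ρ g⁻¹ = ρ g⁻¹ * ρ x := by
      rw [← map_mul, ← map_mul]; congr 1; group
    change ρ (x : G) * (ρ g * b.1 * ρ g⁻¹) = ρ g * b.1 * ρ g⁻¹ * ρ (x : G)
    calc ρ (x : G) * (ρ g * b.1 * ρ g⁻¹) = (ρ (x : G) * ρ g) * b.1 * ρ g⁻¹ := by
          simp only [mul_assoc]
      _ = ρ g * (ρ (g⁻¹ * x * g) * b.1) * ρ g⁻¹ := by rw [h2]; simp only [mul_assoc]
      _ = ρ g * b.1 * (ρ (g⁻¹ * x * g) * ρ g⁻¹) := by rw [h1]; simp only [mul_assoc]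
      _ = _ := by rw [h3]; simp only [mul_assoc]
  have hinv : ∀ g, ρ g * ρ g⁻¹ = 1 := fun g => by rw [← map_mul]; simp
  have hinv' : ∀ g, ρ g⁻¹ * ρ g = 1 := fun g => by rw [← map_mul]; simp
  { toFun := fun g => AlgEquiv.ofAlgHom
      { toFun := fun b => ⟨ρ g * b.1 * ρ g⁻¹, key g b⟩
        map_one' := by apply Subtype.ext; simp [hinv]
        map_mul' := by
          intro a b
          apply Subtype.ext
          change ρ g * (a.1 * b.1) * ρ g⁻¹ = ρ g * a.1 * ρ g⁻¹ * (ρ g * b.1 * ρ g⁻¹)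
          calc _ = ρ g * a.1 * 1 * b.1 * ρ g⁻¹ := by simp only [mul_assoc, mul_one]
            _ = _ := by rw [← hinv' g]; simp only [mul_assoc]
        map_zero' := by apply Subtype.ext; simp
        map_add' := by intro a b; apply Subtype.ext; simp [mul_add, add_mul]
        commutes' := by
          intro c; apply Subtype.ext
          simp [Algebra.algebraMap_eq_smul_one, hinv] }
      { toFun := fun b => ⟨ρ g⁻¹ * b.1 * ρ g, by simpa using key g⁻¹ b⟩
        map_one' := by apply Subtype.ext; simp [hinv']
        map_mul' := by
          intro a b
          apply Subtype.ext
          change ρ g⁻¹ * (a.1 * b.1) * ρ g = ρ g⁻¹ * a.1 * ρ g * (ρ g⁻¹ * b.1 * ρ g)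
          calc _ = ρ g⁻¹ * a.1 * 1 * b.1 * ρ g := by simp only [mul_assoc, mul_one]
            _ = _ := by rw [← hinv g]; simp only [mul_assoc]
        map_zero' := by apply Subtype.ext; simp
        map_add' := by intro a b; apply Subtype.ext; simp [mul_add, add_mul]
        commutes' := by
          intro c; apply Subtype.ext
          simp [Algebra.algebraMap_eq_smul_one, hinv'] }
      (by
        ext1 b; apply Subtype.ext
        change ρ g * (ρ g⁻¹ * b.1 * ρ g) * ρ g⁻¹ = b.1
        calc _ = (ρ g * ρ g⁻¹) * b.1 * (ρ g * ρ g⁻¹) := by simp only [mul_assoc]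
          _ = _ := by rw [hinv]; simp)
      (by
        ext1 b; apply Subtype.ext
        change ρ g⁻¹ * (ρ g * b.1 * ρ g⁻¹) * ρ g = b.1
        calc _ = (ρ g⁻¹ * ρ g) * b.1 * (ρ g⁻¹ * ρ g) := by simp only [mul_assoc]
          _ = _ := by rw [hinv']; simp)
    map_one' := by
      ext1 b; apply Subtype.ext
      change ρ 1 * b.1 * ρ 1⁻¹ = b.1
      simp
    map_mul' := by
      intro g h
      ext1 b; apply Subtype.ext
      change ρ (g * h) * b.1 * ρ (g * h)⁻¹ = ρ g * (ρ h * b.1 * ρ h⁻¹) * ρ g⁻¹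
      rw [mul_inv_rev, map_mul, map_mul]
      simp only [mul_assoc] }

lemma auxConj_apply {G V : Type*} [Group G] [AddCommGroup V] [Module ℂ V]
    (ρ : Representation ℂ G V) (N : Subgroup G) [hN : N.Normal] (g : G)
    (b : auxCent (ρ.comp N.subtype)) : (auxConj ρ N g b).1 = ρ g * b.1 * ρ g⁻¹ := rfl

lemma aux_restrict {G : Type} [Group G] [Fintype G] (V : FDRep ℂ G) [Simple V]
    (N : Subgroup G) [hN : N.Normal] (hpos : finrank ℂ V ≠ 0)
    (hcop : Nat.Coprime N.index (finrank ℂ V)) :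
    finrank ℂ (auxCent ((V.ρ : Representation ℂ G V).comp N.subtype)) = 1 := by
  classical
  let ρ : Representation ℂ G V := V.ρ
  have : IsSemisimpleRing (auxCent (ρ.comp N.subtype)) := aux_semisimple _
  have hinv : ∀ g, ρ g * ρ g⁻¹ = 1 := fun g => by rw [← map_mul]; simp
  have hinv' : ∀ g, ρ g⁻¹ * ρ g = 1 := fun g => by rw [← map_mul]; simp
  have hker : ∀ g ∈ N, auxConj ρ N g = 1 := by
    intro g hg
    ext1 b; apply Subtype.ext
    rw [auxConj_apply, (Subalgebra.mem_centralizer_iff ℂ).mp b.2 (ρ g) ⟨⟨g, hg⟩, rfl⟩,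
      mul_assoc, hinv, mul_one]
    rfl
  have : Fintype (G ⧸ N) := Fintype.ofFinite _
  refine aux_core2 (H := G ⧸ N) (Subalgebra.val _) Subtype.val_injective
    (QuotientGroup.lift N (auxConj ρ N) hker) ?_ ?_ hpos ?_
  · intro x hx
    have hx' : x.1 ∈ auxCent ρ := by
      rw [Subalgebra.mem_centralizer_iff]
      rintro _ ⟨g, rfl⟩
      have h1 : ρ g * x.1 * ρ g⁻¹ = x.1 := congrArg Subtype.val (hx (g : G ⧸ N))
      calc ρ g * x.1 = ρ g * x.1 * ρ g⁻¹ * ρ g := by rw [mul_assoc _ (ρ g⁻¹), hinv', mul_one]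
        _ = x.1 * ρ g := by rw [h1]
    have h1 : finrank ℂ (auxCent ρ) = 1 := by
      rw [← aux_finrank]; exact finrank_endomorphism_simple_eq_one ℂ V
    have hone : (1 : auxCent ρ) ≠ 0 := by
      intro h0
      have hs : Subsingleton (auxCent ρ) := subsingleton_of_zero_eq_one h0.symm
      rw [Module.finrank_zero_of_subsingleton] at h1
      exact zero_ne_one h1
    obtain ⟨c, hc⟩ := (finrank_eq_one_iff_of_nonzero' _ hone).mp h1 ⟨x.1, hx'⟩
    refine ⟨c, Subtype.ext ?_⟩
    have h2 := congrArg Subtype.val hc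
    rw [Algebra.algebraMap_eq_smul_one]
    exact h2.symm
  · intro h b
    obtain ⟨g, rfl⟩ := QuotientGroup.mk_surjective h
    change LinearMap.trace ℂ V (ρ g * b.1 * ρ g⁻¹) = LinearMap.trace ℂ V b.1
    rw [LinearMap.trace_mul_comm, ← mul_assoc, hinv', one_mul]
  · rw [← Nat.card_eq_fintype_card]; exact hcop

/-- If `G` is of minimal order with an irreducible character of degree `n`, and `N` is a
proper normal subgroup, then `gcd(|G:N|, n) > 1`. -/
theorem stmt_1 {G : Type} [Group G] [Fintype G] {n : ℕ}
    (V : FDRep ℂ G) [Simple V] (hdeg : finrank ℂ V = n)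
    (hmin : ∀ (G' : Type) [Group G'] [Fintype G'],
      Fintype.card G' < Fintype.card G → ¬ HasIrrCharDeg G' n)
    (N : Subgroup G) (hN : N.Normal) (hprop : N ≠ ⊤) :
    1 < Nat.gcd N.index n := by
  classical
  have hidx : N.index ≠ 0 := Subgroup.index_ne_zero_of_finite
  by_contra hlt
  have hcop : Nat.Coprime N.index n := by
    have : 0 < Nat.gcd N.index n := Nat.gcd_pos_of_pos_left _ (Nat.pos_of_ne_zero hidx)
    unfold Nat.Coprime
    omega
  have hpos : finrank ℂ V ≠ 0 := by
    intro h0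
    have hs : Subsingleton V := Module.finrank_zero_iff.mp h0
    have h1 : finrank ℂ (V ⟶ V) = 1 := finrank_endomorphism_simple_eq_one ℂ V
    rw [aux_finrank] at h1
    have : Subsingleton (auxCent V.ρ) := ⟨fun a b => Subtype.ext (LinearMap.ext fun v =>
      Subsingleton.elim _ _)⟩
    rw [Module.finrank_zero_of_subsingleton] at h1
    exact zero_ne_one h1
  subst hdeg
  have h1 := aux_restrict V N hpos hcop
  let W : FDRep ℂ N := FDRep.of ((V.ρ : Representation ℂ G V).comp N.subtype)
  have : NeZero (Nat.card N : ℂ) := ⟨by exact_mod_cast Nat.card_pos.ne'⟩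
  refine hmin N ?_ ⟨W, ?_, rfl⟩
  · rw [← Nat.card_eq_fintype_card, ← Nat.card_eq_fintype_card]
    refine lt_of_le_of_ne (Subgroup.card_le_card_group N) fun h => hprop ?_
    exact Subgroup.eq_top_of_card_eq N h
  · rw [FDRep.simple_iff_end_is_rank_one, aux_finrank]
    exact h1
end

section
/- Let G be a finite group with an abelian normal subgroup A. Then every irreducible complex character degree of G divides the index |G : A| (Ito's theorem, divisibility form). -/
open FDRep Module CategoryTheory

lemma ito_common_eigen {E : Type*} [AddCommGroup E] [Module ℂ E] [FiniteDimensional ℂ E]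
    [Nontrivial E] {ι : Type*} (f : ι → Module.End ℂ E) (hc : ∀ i j, Commute (f i) (f j))
    (n : ℕ) (hn : n ≠ 0) (hf : ∀ i, f i ^ n = 1) :
    ∃ (l : ι → ℂ) (w : E), w ≠ 0 ∧ ∀ i, f i w = l i • w := by
  have hss : ∀ i, (f i).IsFinitelySemisimple := by
    intro i
    apply Module.End.IsSemisimple.isFinitelySemisimple
    have hsep : (Polynomial.X ^ n - 1 : Polynomial ℂ).Separable :=
      Polynomial.X_pow_sub_one_separable_iff.2 (by exact_mod_cast hn)
    apply Module.End.isSemisimple_of_squarefree_aeval_eq_zero hsep.squarefree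
    simp [hf]
  have key := Module.End.iSup_iInf_maxGenEigenspace_eq_top_of_iSup_maxGenEigenspace_eq_top_of_commute
    f (fun i j _ => hc i j) (fun i => Module.End.iSup_maxGenEigenspace_eq_top (f i))
  have : ∃ l : ι → ℂ, (⨅ i, (f i).maxGenEigenspace (l i)) ≠ ⊥ := by
    by_contra! h
    simp [h] at key
  obtain ⟨l, hl⟩ := this
  obtain ⟨w, hw, hw0⟩ := (Submodule.ne_bot_iff _).1 hl
  refine ⟨l, w, hw0, fun i => ?_⟩
  have := (Submodule.mem_iInf _).1 hw i
  rw [(hss i).maxGenEigenspace_eq_eigenspace] at this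
  exact Module.End.mem_eigenspace_iff.1 this

lemma ito_trace_integral {E : Type*} [AddCommGroup E] [Module ℂ E] [FiniteDimensional ℂ E]
    (f : Module.End ℂ E) (n : ℕ) (hn : n ≠ 0) (hf : f ^ (n + 1) = f) :
    IsIntegral ℤ (LinearMap.trace ℂ E f) := by
  rw [Module.End.trace_eq_sum_roots_charpoly_of_splits (IsAlgClosed.splits _)]
  apply IsIntegral.multiset_sum
  intro x hx
  have hr := Polynomial.isRoot_of_mem_roots hx
  rw [← Module.End.hasEigenvalue_iff_isRoot_charpoly] at hr
  obtain ⟨v, hv⟩ := hr.exists_hasEigenvector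
  have h1 := hv.pow_apply (n + 1)
  rw [hf, hv.apply_eq_smul] at h1
  have h2 : x = x ^ (n + 1) := smul_left_injective ℂ hv.2 h1
  refine ⟨Polynomial.X ^ (n + 1) - Polynomial.X, Polynomial.monic_X_pow_sub ?_, ?_⟩
  · rw [Polynomial.degree_X]
    exact_mod_cast (by omega : 1 < n + 1)
  · simp [← h2]

lemma ito_sum {G E : Type*} [Group G] [Fintype G] [AddCommGroup E] [Module ℂ E]
    (A : Subgroup G) (f : G → E) (hf : ∀ g (a : A), f (g * a) = f g) :
    ∃ s : Finset G, ∑ g, f g = (Nat.card A : ℂ) • ∑ g ∈ s, f g := by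
  classical
  have : Fintype (G ⧸ A) := Fintype.ofFinite _
  have : Fintype A := Fintype.ofFinite _
  refine ⟨Finset.univ.image (fun q : G ⧸ A => q.out), ?_⟩
  rw [Finset.sum_image (f := f) (g := fun q : G ⧸ A => q.out)
    (fun a _ b _ h => Quotient.out_injective h)]
  rw [← Finset.sum_fiberwise Finset.univ (fun g : G => (g : G ⧸ A)), Finset.smul_sum]
  refine Finset.sum_congr rfl fun q _ => ?_
  have h1 : ∀ g ∈ Finset.univ.filter (fun g : G => (g : G ⧸ A) = q), f g = f q.out := by
    intro g hg
    have hg' : ((q.out : G) : G ⧸ A) = (g : G ⧸ A) := by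
      rw [(Finset.mem_filter.1 hg).2]; exact Quotient.out_eq' q
    have := QuotientGroup.eq.1 hg'
    rw [← hf q.out ⟨_, this⟩]
    simp
  rw [Finset.sum_congr rfl h1, Finset.sum_const, ← Nat.cast_smul_eq_nsmul ℂ]
  congr 2
  rw [Nat.card_eq_fintype_card, ← Finset.card_univ]
  symm
  apply Finset.card_bij (fun (a : A) _ => q.out * (a : G))
  · intro a _
    simp
  · intro a _ b _ h
    simpa using h
  · intro g hg
    have hg' : ((q.out : G) : G ⧸ A) = (g : G ⧸ A) := by
      rw [(Finset.mem_filter.1 hg).2]; exact Quotient.out_eq' q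
    exact ⟨⟨_, QuotientGroup.eq.1 hg'⟩, Finset.mem_univ _, by simp⟩

lemma ito_schur {G E : Type*} [Group G] [Fintype G] [AddCommGroup E] [Module ℂ E]
    [FiniteDimensional ℂ E] [Nontrivial E] (ρ : Representation ℂ G E)
    (hS : ∀ f : Module.End ℂ E, (∀ g, f * ρ g = ρ g * f) → ∃ c : ℂ, f = c • 1)
    (X : Module.End ℂ E) (v : E) :
    ∑ g, LinearMap.trace ℂ E (X * ρ g⁻¹) • ρ g v
      = ((Nat.card G : ℂ) / finrank ℂ E) • X v := by
  have hd : (finrank ℂ E : ℂ) ≠ 0 := by exact_mod_cast (finrank_pos (R := ℂ) (M := E)).ne'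
  have h1 : ∀ Y : Module.End ℂ E, ∑ g, ρ g * Y * ρ g⁻¹ =
      ((Nat.card G : ℂ) / finrank ℂ E * LinearMap.trace ℂ E Y) • 1 := by
    intro Y
    obtain ⟨c, hc⟩ := hS (∑ g, ρ g * Y * ρ g⁻¹) (by
      intro h
      rw [Finset.sum_mul, Finset.mul_sum]
      refine Fintype.sum_equiv (Equiv.mulLeft h⁻¹) _ _ fun g => ?_
      simp only [Equiv.coe_mulLeft, mul_inv_rev, inv_inv, map_mul, ← mul_assoc]
      rw [← map_mul ρ h, mul_inv_cancel, map_one, one_mul])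
    rw [hc]
    have ht := congrArg (LinearMap.trace ℂ E) hc
    have : ∀ g, LinearMap.trace ℂ E (ρ g * Y * ρ g⁻¹) = LinearMap.trace ℂ E Y := by
      intro g
      rw [LinearMap.trace_mul_comm, ← mul_assoc, ← map_mul, inv_mul_cancel, map_one, one_mul]
    simp only [map_sum, this, Finset.sum_const, Finset.card_univ, map_smul,
      LinearMap.trace_one, smul_eq_mul, nsmul_eq_mul] at ht
    congr 1
    rw [Nat.card_eq_fintype_card]
    field_simp
    exact ht.symm
  have h2 : ∀ (φ : E →ₗ[ℂ] ℂ) (u : E), ∑ g, φ (ρ g⁻¹ u) • ρ g v =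
      ((Nat.card G : ℂ) / finrank ℂ E * φ v) • u := by
    intro φ u
    have := congrArg (fun f : Module.End ℂ E => f u) (h1 (φ.smulRight v))
    simpa [LinearMap.sum_apply] using this
  let b := finBasis ℂ E
  have h3 : ∀ Z : Module.End ℂ E, LinearMap.trace ℂ E Z = ∑ i, b.coord i (Z (b i)) := by
    intro Z
    rw [LinearMap.trace_eq_matrix_trace ℂ b, Matrix.trace]
    simp [LinearMap.toMatrix_apply]
  calc _ = ∑ g, ∑ i, b.coord i (ρ g⁻¹ (X (b i))) • ρ g v := by
        refine Finset.sum_congr rfl fun g _ => ?_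
        rw [LinearMap.trace_mul_comm, h3, Finset.sum_smul]; rfl
    _ = ∑ i, ((Nat.card G : ℂ) / finrank ℂ E * b.coord i v) • X (b i) := by
        rw [Finset.sum_comm]
        exact Finset.sum_congr rfl fun i _ => h2 _ _
    _ = _ := by
        conv_rhs => rw [← b.sum_repr v, map_sum, Finset.smul_sum]
        refine Finset.sum_congr rfl fun i _ => ?_
        rw [map_smul, smul_smul, Basis.coord_apply]

lemma ito_main {G E : Type*} [Group G] [Fintype G] [AddCommGroup E] [Module ℂ E]
    [FiniteDimensional ℂ E] [Nontrivial E] (ρ : Representation ℂ G E)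
    (hS : ∀ f : Module.End ℂ E, (∀ g, f * ρ g = ρ g * f) → ∃ c : ℂ, f = c • 1)
    (A : Subgroup G) (hA : A.Normal)
    (hab : ∀ x y : G, x ∈ A → y ∈ A → x * y = y * x) :
    finrank ℂ E ∣ A.index := by
  classical
  have : Fintype A := Fintype.ofFinite _
  have hd : (finrank ℂ E : ℂ) ≠ 0 := by exact_mod_cast (finrank_pos (R := ℂ) (M := E)).ne'
  have hA0 : (Nat.card A : ℂ) ≠ 0 := by exact_mod_cast Nat.card_pos.ne'
  have hGn : ∀ g : G, ρ g ^ Nat.card G = 1 := fun g => by rw [← map_pow]; simp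
  obtain ⟨l, w, hw0, hw⟩ := ito_common_eigen (fun a : A => ρ a)
    (fun a b => by
      change ρ a * ρ b = ρ b * ρ a
      rw [← map_mul, ← map_mul, hab a b a.2 b.2]) (Nat.card G) Nat.card_pos.ne'
    (fun a => hGn a)
  have hl1 : l 1 = 1 := by
    have := hw 1
    simp only [OneMemClass.coe_one, map_one, Module.End.one_apply] at this
    exact smul_left_injective ℂ hw0 (by simpa using this.symm)
  have hlm : ∀ a b, l (a * b) = l a * l b := by
    intro a b
    apply smul_left_injective ℂ hw0
    simp only
    rw [← hw (a * b), Subgroup.coe_mul, map_mul, Module.End.mul_apply, hw b, map_smul, hw a,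
      smul_smul, mul_comm]
  have hli : ∀ a, l a⁻¹ * l a = 1 := fun a => by rw [← hlm]; simp [hl1]
  have hl0 : ∀ a, l a ≠ 0 := fun a h => by have := hli a; simp [h] at this
  set P : Module.End ℂ E := (Nat.card A : ℂ)⁻¹ • ∑ a : A, l a⁻¹ • ρ a with hP
  have hbP : ∀ b : A, ρ b * P = l b • P := by
    intro b
    rw [hP, mul_smul_comm, smul_comm (l b), Finset.mul_sum,
      Finset.smul_sum (r := l b)]
    congr 1
    refine Fintype.sum_equiv (Equiv.mulLeft b) _ _ fun a => ?_
    simp only [Equiv.coe_mulLeft, mul_inv_rev, hlm, Subgroup.coe_mul, map_mul, smul_smul,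
      mul_smul_comm]
    congr 1
    linear_combination (- l a⁻¹) * hli b
  have hPb : ∀ b : A, P * ρ b = l b • P := by
    intro b
    rw [← hbP, hP, mul_smul_comm, smul_mul_assoc, Finset.mul_sum, Finset.sum_mul]
    congr 1
    refine Finset.sum_congr rfl fun a _ => ?_
    rw [mul_smul_comm, smul_mul_assoc, ← map_mul, ← map_mul, hab a b a.2 b.2]
  have hPP : P * P = P := by
    conv_lhs => arg 1; rw [hP]
    rw [smul_mul_assoc, Finset.sum_mul]
    simp only [smul_mul_assoc, hbP, smul_smul, hli, one_smul, Finset.sum_const, Finset.card_univ]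
    rw [← Nat.card_eq_fintype_card, ← Nat.cast_smul_eq_nsmul ℂ, smul_smul, inv_mul_cancel₀ hA0,
      one_smul]
  have hPw : P w = w := by
    rw [hP]
    simp only [LinearMap.smul_apply, LinearMap.sum_apply, hw, smul_smul, hli, one_smul,
      Finset.sum_const, Finset.card_univ]
    rw [← Nat.card_eq_fintype_card, ← Nat.cast_smul_eq_nsmul ℂ, smul_smul, inv_mul_cancel₀ hA0,
      one_smul]
  -- integrality of the traces
  have hint : ∀ g, IsIntegral ℤ (LinearMap.trace ℂ E (P * ρ g)) := by
    intro g
    by_cases hg : ∀ a : A, l ⟨g * a * g⁻¹, hA.conj_mem a a.2 g⟩ = l a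
    · have hcomm : Commute P (ρ g) := by
        change P * ρ g = ρ g * P
        rw [hP, smul_mul_assoc, mul_smul_comm, Finset.mul_sum, Finset.sum_mul]
        congr 1
        symm
        refine Fintype.sum_equiv (MulAut.conjNormal g).toEquiv _ _ fun a => ?_
        have e : (MulAut.conjNormal g a : A) = ⟨g * a * g⁻¹, hA.conj_mem a a.2 g⟩ :=
          Subtype.ext (MulAut.conjNormal_apply g a)
        have e2 : l (MulAut.conjNormal g a)⁻¹ = l a⁻¹ := by
          have h1 := hli (MulAut.conjNormal g a)
          rw [e, hg, ← e] at h1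
          exact mul_right_cancel₀ (hl0 a) (h1.trans (hli a).symm)
        simp only [MulEquiv.toEquiv_eq_coe, EquivLike.coe_coe]
        rw [e2, mul_smul_comm, smul_mul_assoc, MulAut.conjNormal_apply, ← map_mul, ← map_mul]
        simp
      apply ito_trace_integral _ (Nat.card G) Nat.card_pos.ne'
      rw [hcomm.mul_pow, pow_succ (ρ g), hGn, one_mul, IsIdempotentElem.pow_succ_eq _ hPP]
    · push Not at hg
      obtain ⟨a, ha⟩ := hg
      set c : A := ⟨g * a * g⁻¹, hA.conj_mem a a.2 g⟩ with hc
      have h1 : l c • LinearMap.trace ℂ E (P * ρ g) = l a • LinearMap.trace ℂ E (P * ρ g) := by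
        rw [← map_smul, ← map_smul, ← smul_mul_assoc, ← smul_mul_assoc, ← hPb c, ← hbP a,
          mul_assoc P, ← map_mul, mul_assoc (ρ a), LinearMap.trace_mul_comm ℂ (ρ a), mul_assoc P,
          ← map_mul ρ g]
        simp [hc]
      have h2 : LinearMap.trace ℂ E (P * ρ g) = 0 := by
        by_contra h
        exact ha (mul_right_cancel₀ h h1)
      rw [h2]
      exact isIntegral_zero
  have hsch := ito_schur ρ hS P w
  obtain ⟨s, hs⟩ := ito_sum A (fun g => LinearMap.trace ℂ E (P * ρ g⁻¹) • ρ g w) (by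
    intro g a
    rw [mul_inv_rev, map_mul ρ g, Module.End.mul_apply, hw, map_mul ρ, ← mul_assoc,
      ← InvMemClass.coe_inv, hPb, smul_mul_assoc, map_smul, map_smul, smul_smul, smul_eq_mul]
    congr 1
    linear_combination (LinearMap.trace ℂ E (P * ρ g⁻¹)) * hli a)
  have hkey : ((A.index : ℂ) / finrank ℂ E) • w =
      ∑ g ∈ s, LinearMap.trace ℂ E (P * ρ g⁻¹) • ρ g w := by
    rw [hs, hPw, ← Subgroup.card_mul_index A, Nat.cast_mul, mul_div_assoc, mul_smul] at hsch
    exact (smul_right_injective E hA0 hsch).symm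
  -- integrality of the quotient
  have hcint : IsIntegral (integralClosure ℤ ℂ) ((A.index : ℂ) / finrank ℂ E) := by
    refine isIntegral_of_smul_mem_submodule
      (Submodule.span (integralClosure ℤ ℂ) (Set.range fun g => ρ g w)) ?_ ?_ _ ?_
    · rw [Submodule.ne_bot_iff]
      exact ⟨w, Submodule.subset_span ⟨1, by simp⟩, hw0⟩
    · exact Submodule.fg_span (Set.finite_range _)
    · intro n hn
      induction hn using Submodule.span_induction with
      | zero => simp
      | add x y _ _ hx hy => rw [smul_add]; exact Submodule.add_mem _ hx hy
      | smul r x _ hx => rw [smul_comm]; exact Submodule.smul_mem _ r hx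
      | mem x hx =>
        obtain ⟨h, rfl⟩ := hx
        simp only
        rw [← map_smul, hkey, map_sum]
        refine Submodule.sum_mem _ fun g _ => ?_
        rw [map_smul, ← Module.End.mul_apply, ← map_mul]
        exact Submodule.smul_mem _ (⟨_, hint g⁻¹⟩ : integralClosure ℤ ℂ)
          (Submodule.subset_span ⟨h * g, rfl⟩)
  have hcint2 : IsIntegral ℤ ((A.index : ℂ) / finrank ℂ E) := isIntegral_trans _ hcint
  have hcq : IsIntegral ℤ ((A.index : ℚ) / finrank ℂ E) := by
    rw [← isIntegral_algebraMap_iff (algebraMap ℚ ℂ).injective]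
    simpa using hcint2
  obtain ⟨z, hz⟩ := IsIntegrallyClosed.isIntegral_iff.1 hcq
  have hdq : (finrank ℂ E : ℚ) ≠ 0 := by exact_mod_cast hd
  rw [eq_div_iff hdq] at hz
  rw [← Int.natCast_dvd_natCast]
  refine ⟨z, ?_⟩
  have : (z : ℚ) * finrank ℂ E = A.index := by simpa using hz
  rw [mul_comm]
  exact_mod_cast this.symm

/-- Ito's theorem (divisibility form): if `A ⊴ G` is abelian, then every irreducible complex
character degree of `G` divides `|G : A|`. -/
theorem stmt_14 {G : Type} [Group G] [Fintype G]
    (A : Subgroup G) (hA : A.Normal)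
    (habelian : ∀ x y : G, x ∈ A → y ∈ A → x * y = y * x)
    (V : FDRep ℂ G) [Simple V] :
    finrank ℂ V ∣ A.index := by
  have h1 : finrank ℂ (Representation.linHom V.ρ V.ρ).invariants = 1 := by
    rw [(Representation.linHom.invariantsEquivFDRepHom V V).finrank_eq]
    exact finrank_endomorphism_simple_eq_one ℂ V
  have hnt : Nontrivial V := by
    by_contra h
    rw [not_nontrivial_iff_subsingleton] at h
    have : Subsingleton (V →ₗ[ℂ] V) := inferInstance
    rw [finrank_zero_of_subsingleton] at h1
    exact absurd h1 (by norm_num)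
  have hmem : ∀ f : Module.End ℂ V, (∀ g, f * V.ρ g = V.ρ g * f) →
      f ∈ (Representation.linHom V.ρ V.ρ).invariants := by
    intro f hf g
    rw [Representation.linHom_apply]
    change V.ρ g * (f * V.ρ g⁻¹) = f
    rw [hf, ← mul_assoc, ← map_mul, mul_inv_cancel, map_one, one_mul]
  refine ito_main V.ρ (fun f hf => ?_) A hA habelian
  have hone : (⟨1, hmem 1 (by simp)⟩ : (Representation.linHom V.ρ V.ρ).invariants) ≠ 0 := by
    intro h
    exact one_ne_zero (α := Module.End ℂ V) (congrArg Subtype.val h)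
  obtain ⟨c, hc⟩ := (finrank_eq_one_iff_of_nonzero' _ hone).1 h1 ⟨f, hmem f hf⟩
  exact ⟨c, (congrArg Subtype.val hc).symm⟩
end
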